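/- Let d ≥ 1, 1 ≤ j ≤ d, and let m_j, m_{j+1}, …, m_d and b be smooth (C^∞) functions ℝ → ℝ. Define P_0(b) = 𝟏 (the constant function 1) and P_i(b) = −Ω_b^{[i−1]}(b) for i ≥ 1, where Ω_b(h) = h' − b·h. Then at every x ∈ ℝ the two expressions for the invariant R_j coincide: Σ_{w=j}^{d} m_w(x)·C(w,j)·B_{w−j}(−b(x), −b'(x), …, −b^{(w−j−1)}(x)) = Σ_{i=0}^{d−j} C(j+i, j)·m_{i+j}(x)·P_i(b)(x), where B_n is the n-th complete Bell polynomial and C(·,·) denotes binomial coefficients. -/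

import Mathlib

/-!
Both sides agree term by term once `B_n(-b, -b', …) = P_n(b)` is known, and this holds because the
two sequences start at `1` and satisfy the same recurrence
`u_{n+1} = ∑_k C(n,k) c^{(k)} u_{n-k}`, where `c = -b`.

For `P` one uses `P_{n+1} = Ω_b P_n` (also for `n = 0`) and the twisted Leibniz rule
`Ω_b (u v) = u' v + u Ω_b v`; the recurrence follows by induction with Pascal's rule
(`P_recurrence`).

For the Bell polynomials, `B_n / n!` is the sum of the monomials
`W(j) = ∏ y_m ^ {j_m} / j_m!`, with `y_m = x_m / m!`, over all multiplicity sequences `j` of weight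
`∑ m j_m = n` (`bellComplete_eq`). Multiplying by the weight and using
`j_m W(j) = y_m W(j - e_m)` gives the recurrence (`bellSum_recurrence`, `bellComplete_recurrence`).
-/

/-- The partial Bell polynomial `B_{n,k}(x_1, …, x_{n-k+1})`, a sum over all
sequences `(j_1, …, j_{n-k+1})` of nonnegative integers with
`j_1 + ⋯ + j_{n-k+1} = k` and `j_1 + 2 j_2 + ⋯ + (n-k+1) j_{n-k+1} = n`.
The argument `x m` is `x_m` (indices `1, …, n-k+1` are used). -/
noncomputable def bellPartial (n k : ℕ) (x : ℕ → ℝ) : ℝ :=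
  ∑ j ∈ Finset.univ.filter
      (fun j : Fin (n - k + 1) → Fin (n + 1) =>
        (∑ m : Fin (n - k + 1), (j m : ℕ)) = k ∧
        (∑ m : Fin (n - k + 1), ((m : ℕ) + 1) * (j m : ℕ)) = n),
    ((n.factorial : ℝ) / ∏ m : Fin (n - k + 1), ((j m : ℕ).factorial : ℝ)) *
      ∏ m : Fin (n - k + 1), (x ((m : ℕ) + 1) / (((m : ℕ) + 1).factorial : ℝ)) ^ ((j m : ℕ))

/-- The complete Bell polynomial `B_n(x_1, …, x_n) = ∑_{k=1}^n B_{n,k}`, with `B_0 = 1`. -/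
noncomputable def bellComplete (n : ℕ) (x : ℕ → ℝ) : ℝ :=
  if n = 0 then 1 else ∑ k ∈ Finset.Icc 1 n, bellPartial n k x

/-- The operator `Ω_b(h) = h' - b·h` on functions `ℝ → ℝ`. -/
noncomputable def Omega (b : ℝ → ℝ) (h : ℝ → ℝ) : ℝ → ℝ :=
  fun x => deriv h x - b x * h x

/-- `P_0(b) = 𝟏` and `P_i(b) = -Ω_b^{[i-1]}(b)` for `i ≥ 1`. -/
noncomputable def P (b : ℝ → ℝ) (i : ℕ) : ℝ → ℝ :=
  if i = 0 then fun _ => 1 else fun x => -((Omega b)^[i - 1] b x)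

open Finset

/-! ### Sums over multiplicity sequences -/

/-- The multiplicity sequences of weight `n` with parts of size at most `N`: `j m` is the
multiplicity of the part `m + 1`. -/
noncomputable def multSeqs (N n : ℕ) : Finset (ℕ →₀ ℕ) :=
  {j ∈ (range N).finsupp (fun _ => range (n + 1)) | ∑ m ∈ range N, (m + 1) * j m = n}

/-- The normalised monomial `∏ y_m ^ {j_m} / j_m!`, with `y` indexed from `0`. -/
noncomputable def bellMonomial (N : ℕ) (y : ℕ → ℝ) (j : ℕ →₀ ℕ) : ℝ :=
  ∏ m ∈ range N, y m ^ j m / ((j m).factorial : ℝ)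

/-- The sum of `bellMonomial` over the multiplicity sequences of weight `n`, that is `B_n / n!`
when `y m = x_{m+1} / (m+1)!` and `n ≤ N`. -/
noncomputable def bellSum (N : ℕ) (y : ℕ → ℝ) (n : ℕ) : ℝ :=
  ∑ j ∈ multSeqs N n, bellMonomial N y j

/-- The bound on the entries in the definition of `multSeqs` follows from the weight. -/
lemma mem_multSeqs {N n : ℕ} {j : ℕ →₀ ℕ} :
    j ∈ multSeqs N n ↔ j.support ⊆ range N ∧ ∑ m ∈ range N, (m + 1) * j m = n := by
  simp only [multSeqs, mem_filter, mem_finsupp_iff]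
  constructor
  · rintro ⟨⟨h1, _⟩, h2⟩
    exact ⟨h1, h2⟩
  · rintro ⟨h1, h2⟩
    refine ⟨⟨h1, fun i hi => ?_⟩, h2⟩
    have := single_le_sum (f := fun m => (m + 1) * j m) (fun _ _ => Nat.zero_le _) hi
    simp only [h2] at this
    rw [mem_range]
    nlinarith

lemma weight_add_single {N m : ℕ} (hm : m < N) (i : ℕ →₀ ℕ) :
    ∑ l ∈ range N, (l + 1) * (i + Finsupp.single m 1 : ℕ →₀ ℕ) l
      = ∑ l ∈ range N, (l + 1) * i l + (m + 1) := by
  simp [mul_add, sum_add_distrib, Finsupp.single_apply, hm]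

lemma bellMonomial_add_single {N m : ℕ} (hm : m < N) (y : ℕ → ℝ) (i : ℕ →₀ ℕ) :
    ((i m + 1 : ℕ) : ℝ) * bellMonomial N y (i + Finsupp.single m 1)
      = y m * bellMonomial N y i := by
  unfold bellMonomial
  have hm' : m ∈ range N := mem_range.2 hm
  rw [← mul_prod_erase _ _ hm', ← mul_prod_erase _ (fun l => y l ^ i l / _) hm']
  have : ∏ l ∈ (range N).erase m, y l ^ (i + Finsupp.single m 1 : ℕ →₀ ℕ) l /
        (((i + Finsupp.single m 1 : ℕ →₀ ℕ) l).factorial : ℝ)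
      = ∏ l ∈ (range N).erase m, y l ^ i l / ((i l).factorial : ℝ) := by
    refine prod_congr rfl fun l hl => ?_
    simp [Finsupp.single_eq_of_ne (ne_of_mem_erase hl)]
  rw [this]
  have h1 : ((i m).factorial : ℝ) ≠ 0 := by positivity
  have h2 : ((i m : ℝ) + 1) ≠ 0 := by positivity
  simp only [Finsupp.add_apply, Finsupp.single_eq_same, Nat.factorial_succ, pow_succ]
  push_cast
  field_simp

/-- Removing one part of size `m + 1` is a bijection from the sequences with `j m ≠ 0`. -/
lemma sum_mult_mul_bellMonomial {N n m : ℕ} (hm : m < N) (hmn : m ≤ n) (y : ℕ → ℝ) :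
    ∑ j ∈ multSeqs N (n + 1), (j m : ℝ) * bellMonomial N y j = y m * bellSum N y (n - m) := by
  rw [bellSum, mul_sum]
  have hfil : ∑ j ∈ multSeqs N (n + 1), (j m : ℝ) * bellMonomial N y j
      = ∑ j ∈ multSeqs N (n + 1) with j m ≠ 0, (j m : ℝ) * bellMonomial N y j := by
    rw [sum_filter_of_ne]
    intro j _ h h0
    simp [h0] at h
  rw [hfil]
  symm
  refine sum_nbij' (fun i => i + Finsupp.single m 1) (fun j => j - Finsupp.single m 1)
    ?_ ?_ ?_ ?_ ?_
  · intro i hi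
    rw [mem_multSeqs] at hi
    rw [mem_filter, mem_multSeqs, weight_add_single hm]
    refine ⟨⟨?_, by omega⟩, by simp⟩
    refine Finsupp.support_add.trans (union_subset hi.1 ?_)
    exact Finsupp.support_single_subset.trans (by simpa using hm)
  · intro j hj
    rw [mem_filter, mem_multSeqs] at hj
    have hle : Finsupp.single m 1 ≤ j := by
      rw [Finsupp.single_le_iff]
      omega
    have hw := weight_add_single hm (j - Finsupp.single m 1)
    rw [tsub_add_cancel_of_le hle, hj.1.2] at hw
    rw [mem_multSeqs]
    refine ⟨Finsupp.support_tsub.trans hj.1.1, by omega⟩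
  · intro i _
    simp
  · intro j hj
    rw [mem_filter] at hj
    have hle : Finsupp.single m 1 ≤ j := by
      rw [Finsupp.single_le_iff]
      omega
    exact tsub_add_cancel_of_le hle
  · intro i _
    rw [← bellMonomial_add_single hm]
    simp

lemma bellSum_recurrence (n : ℕ) (y : ℕ → ℝ) :
    ((n : ℝ) + 1) * bellSum (n + 1) y (n + 1)
      = ∑ m ∈ range (n + 1), ((m : ℝ) + 1) * (y m * bellSum (n + 1) y (n - m)) := by
  have h : ∀ m ∈ range (n + 1), ((m : ℝ) + 1) * (y m * bellSum (n + 1) y (n - m))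
      = ∑ j ∈ multSeqs (n + 1) (n + 1),
          ((m : ℝ) + 1) * ((j m : ℝ) * bellMonomial (n + 1) y j) := by
    intro m hm
    rw [mem_range] at hm
    rw [← sum_mult_mul_bellMonomial hm (by omega), mul_sum]
  rw [sum_congr rfl h, sum_comm, bellSum, mul_sum]
  refine sum_congr rfl fun j hj => ?_
  have hw : ((∑ m ∈ range (n + 1), (m + 1) * j m : ℕ) : ℝ) = ((n + 1 : ℕ) : ℝ) := by
    rw [(mem_multSeqs.1 hj).2]
  push_cast at hw
  rw [← hw, sum_mul]
  exact sum_congr rfl fun m _ => by ring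

/-! ### The recurrence for the complete Bell polynomials -/

/-- If `j` has weight `n` and `k` parts, then no part exceeds `n - k + 1`. -/
lemma multSeqs_eq_zero {N n k : ℕ} {j : ℕ →₀ ℕ} (hj : j ∈ multSeqs N n)
    (hk : ∑ m ∈ range N, j m = k) {m : ℕ} (hm : n - k + 1 ≤ m) : j m = 0 := by
  obtain ⟨hs, hw⟩ := mem_multSeqs.1 hj
  by_contra h0
  have hmN : m ∈ range N := hs (Finsupp.mem_support_iff.2 h0)
  have h1 := single_le_sum (f := fun m => m * j m) (fun _ _ => Nat.zero_le _) hmN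
  have h2 : ∑ m ∈ range N, m * j m + k = n := by
    rw [← hk, ← sum_add_distrib, ← hw]
    exact sum_congr rfl fun _ _ => by ring
  have h3 : m ≤ m * j m := Nat.le_mul_of_pos_right _ (Nat.pos_of_ne_zero h0)
  omega

/-- `B_{n,k} / n!` collects the monomials with exactly `k` parts. -/
lemma bellPartial_eq {N n k : ℕ} (hk : 1 ≤ k) (hkn : k ≤ n) (hN : n ≤ N) (x : ℕ → ℝ) :
    bellPartial n k x = (n.factorial : ℝ) *
      ∑ j ∈ multSeqs N n with ∑ m ∈ range N, j m = k,
        bellMonomial N (fun m => x (m + 1) / ((m + 1).factorial : ℝ)) j := by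
  have hM : range (n - k + 1) ⊆ range N := range_subset_range.2 (by omega)
  rw [bellPartial, mul_sum]
  symm
  have hlt : ∀ j ∈ multSeqs N n, ∀ m, j m < n + 1 := by
    intro j hj m
    by_cases hm : m ∈ range N
    · exact mem_range.1 ((mem_finsupp_iff.1 (mem_filter.1 hj).1).2 m hm)
    · have := (mem_multSeqs.1 hj).1
      rw [Finsupp.notMem_support_iff.1 (fun h => hm (this h))]
      omega
  refine sum_bij (fun j hj m => ⟨j m, hlt j (mem_filter.1 hj).1 m⟩) ?_ ?_ ?_ ?_
  · intro j hj
    obtain ⟨hj1, hj2⟩ := mem_filter.1 hj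
    have hz := fun m hm => multSeqs_eq_zero hj1 hj2 (m := m) hm
    rw [mem_filter]
    refine ⟨mem_univ _, ?_, ?_⟩
    · simp only
      rw [Fin.sum_univ_eq_sum_range (fun m => j m)]
      refine (sum_subset hM fun m _ hm => ?_).trans hj2
      exact hz m (not_lt.1 fun h => hm (mem_range.2 h))
    · simp only
      rw [Fin.sum_univ_eq_sum_range (fun m => (m + 1) * j m)]
      refine (sum_subset hM fun m _ hm => ?_).trans (mem_multSeqs.1 hj1).2
      rw [hz m (by simpa using hm), mul_zero]
  · intro j hj i hi h
    obtain ⟨hj1, hj2⟩ := mem_filter.1 hj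
    obtain ⟨hi1, hi2⟩ := mem_filter.1 hi
    ext m
    by_cases hm : m < n - k + 1
    · simpa using congrFun h ⟨m, hm⟩
    · rw [multSeqs_eq_zero hj1 hj2 (not_lt.1 hm), multSeqs_eq_zero hi1 hi2 (not_lt.1 hm)]
  · intro f hf
    obtain ⟨-, hf1, hf2⟩ := mem_filter.1 hf
    let j : ℕ →₀ ℕ := Finsupp.onFinset (range (n - k + 1))
      (fun m => if h : m < n - k + 1 then (f ⟨m, h⟩ : ℕ) else 0) (by
        intro m hm
        by_contra h
        rw [mem_range] at h
        simp [h] at hm)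
    have hjf : ∀ m : Fin (n - k + 1), j m = f m := by
      intro m
      simp only [j, Finsupp.onFinset_apply, dif_pos m.2]
    have hz : ∀ m ∉ range (n - k + 1), j m = 0 := by
      intro m hm
      rw [mem_range] at hm
      simp only [j, Finsupp.onFinset_apply, dif_neg hm]
    refine ⟨j, ?_, ?_⟩
    · rw [mem_filter, mem_multSeqs]
      refine ⟨⟨?_, ?_⟩, ?_⟩
      · exact Finsupp.support_onFinset_subset.trans hM
      · rw [← sum_subset hM fun m _ hm => by rw [hz m hm, mul_zero],
          ← Fin.sum_univ_eq_sum_range (fun m => (m + 1) * j m)]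
        simpa only [hjf] using hf2
      · rw [← sum_subset hM fun m _ hm => hz m hm, ← Fin.sum_univ_eq_sum_range (fun m => j m)]
        simpa only [hjf] using hf1
    · funext m
      exact Fin.ext (hjf m)
  · intro j hj
    obtain ⟨hj1, hj2⟩ := mem_filter.1 hj
    simp only
    rw [bellMonomial, ← prod_subset hM fun m _ hm => by
        rw [multSeqs_eq_zero hj1 hj2 (m := m) (by simpa using hm)]; simp,
      prod_div_distrib, Fin.prod_univ_eq_prod_range (fun m => ((j m).factorial : ℝ)),
      Fin.prod_univ_eq_prod_range
        (fun m => (x (m + 1) / ((m + 1).factorial : ℝ)) ^ j m)]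
    ring

lemma bellComplete_eq {N n : ℕ} (hN : n ≤ N) (x : ℕ → ℝ) :
    bellComplete n x = (n.factorial : ℝ) *
      bellSum N (fun m => x (m + 1) / ((m + 1).factorial : ℝ)) n := by
  rcases Nat.eq_zero_or_pos n with rfl | hn
  · have : multSeqs N 0 = {0} := by
      ext j
      rw [mem_multSeqs, mem_singleton]
      constructor
      · rintro ⟨h1, h2⟩
        ext m
        by_contra h0
        have := (sum_eq_zero_iff.1 h2) m (h1 (Finsupp.mem_support_iff.2 h0))
        simp at this
        exact h0 this
      · rintro rfl
        simp
    simp [bellComplete, bellSum, this, bellMonomial]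
  · rw [bellComplete, if_neg hn.ne']
    rw [sum_congr rfl fun k hk => bellPartial_eq (mem_Icc.1 hk).1 (mem_Icc.1 hk).2 hN x,
      ← mul_sum, bellSum]
    congr 1
    refine sum_fiberwise_of_maps_to (fun j hj => ?_) _
    obtain ⟨-, hw⟩ := mem_multSeqs.1 hj
    rw [mem_Icc]
    constructor
    · by_contra h
      have h0 : ∑ m ∈ range N, j m = 0 := by omega
      rw [sum_eq_zero_iff] at h0
      rw [sum_eq_zero fun m hm => by rw [h0 m hm, mul_zero]] at hw
      omega
    · rw [← hw]
      exact sum_le_sum fun m _ => Nat.le_mul_of_pos_left _ (Nat.succ_pos m)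

lemma bellComplete_recurrence (n : ℕ) (x : ℕ → ℝ) :
    bellComplete (n + 1) x
      = ∑ k ∈ range (n + 1), (n.choose k : ℝ) * (x (k + 1) * bellComplete (n - k) x) := by
  rw [bellComplete_eq le_rfl, Nat.factorial_succ]
  push_cast
  rw [mul_comm ((n : ℝ) + 1), mul_assoc, bellSum_recurrence, mul_sum]
  refine sum_congr rfl fun k hk => ?_
  have hk' : k ≤ n := by
    rw [mem_range] at hk
    omega
  rw [bellComplete_eq (N := n + 1) (n := n - k) (by omega), Nat.cast_choose ℝ hk',
    Nat.factorial_succ]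
  push_cast
  have h1 : (k.factorial : ℝ) ≠ 0 := by positivity
  have h2 : ((n - k).factorial : ℝ) ≠ 0 := by positivity
  have h3 : ((k : ℝ) + 1) ≠ 0 := by positivity
  field_simp

/-! ### The recurrence for the iterates of `Ω_b` -/

lemma P_zero (b : ℝ → ℝ) : P b 0 = fun _ => 1 := by
  simp [P]

/-- `P_{n+1} = Ω_b P_n`, which for `n = 0` reads `-b = 1' - b · 1`. -/
lemma P_succ (b : ℝ → ℝ) (n : ℕ) : P b (n + 1) = Omega b (P b n) := by
  rcases n with _ | n
  · funext x
    simp [P, Omega]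
  · funext x
    have h : deriv (fun y => -((Omega b)^[n] b y)) x = -deriv ((Omega b)^[n] b) x :=
      deriv.fun_neg
    simp only [P, Nat.add_eq_zero_iff, one_ne_zero, and_false, if_false, Nat.add_sub_cancel,
      Function.iterate_succ_apply', Omega, h]
    ring

lemma contDiff_P {b : ℝ → ℝ} (hb : ContDiff ℝ (⊤ : ℕ∞) b) (n : ℕ) :
    ContDiff ℝ (⊤ : ℕ∞) (P b n) := by
  induction n with
  | zero =>
    rw [P_zero]
    exact contDiff_const
  | succ n ih =>
    rw [P_succ]
    have h : ContDiff ℝ (⊤ : ℕ∞) (deriv (P b n)) := (contDiff_infty_iff_deriv.1 ih).2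
    exact h.sub (hb.mul ih)

lemma P_recurrence {b : ℝ → ℝ} (hb : ContDiff ℝ (⊤ : ℕ∞) b) (n : ℕ) (x : ℝ) :
    P b (n + 1) x
      = ∑ k ∈ range (n + 1), (n.choose k : ℝ) * (-(iteratedDeriv k b x) * P b (n - k) x) := by
  induction n generalizing x with
  | zero => simp [P]
  | succ n ih =>
    have hd : ∀ k, HasDerivAt (iteratedDeriv k b) (iteratedDeriv (k + 1) b x) x := by
      intro k
      rw [iteratedDeriv_succ]
      refine ((hb.differentiable_iteratedDeriv k ?_) x).hasDerivAt
      exact_mod_cast WithTop.coe_lt_top _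
    have hP : ∀ k, HasDerivAt (P b k) (P b (k + 1) x + b x * P b k x) x := by
      intro k
      have := (((contDiff_P hb k).differentiable (by simp)) x).hasDerivAt
      rw [P_succ]
      simpa [Omega] using this
    have hsum := HasDerivAt.fun_sum (u := range (n + 1)) fun k _ =>
      (((hd k).neg.mul (hP (n - k))).const_mul (n.choose k : ℝ))
    rw [P_succ, Omega, (hsum.congr_of_eventuallyEq (.of_forall ih)).deriv, ih x, mul_sum, ← sum_sub_distrib,
      sum_choose_succ_mul (fun i l => -(iteratedDeriv i b x) * P b l x) n, ← sum_add_distrib]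
    refine sum_congr rfl fun k hk => ?_
    have hk' : n + 1 - k = n - k + 1 := by
      rw [mem_range] at hk
      omega
    rw [hk']
    simp only [Pi.neg_apply]
    ring

/-! ### Comparison of the two sequences -/

lemma bellComplete_eq_P {b : ℝ → ℝ} (hb : ContDiff ℝ (⊤ : ℕ∞) b) (n : ℕ) (x : ℝ) :
    bellComplete n (fun s => -(iteratedDeriv (s - 1) b x)) = P b n x := by
  induction n using Nat.strong_induction_on with
  | _ n ih =>
    rcases n with _ | n
    · simp [bellComplete, P]
    · rw [bellComplete_recurrence, P_recurrence hb]
      refine sum_congr rfl fun k _ => ?_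
      rw [ih (n - k) (by omega), Nat.add_sub_cancel]

/-- The two expressions for the invariant `R_j` coincide:
`∑_{w=j}^d m_w C(w,j) B_{w-j}(-b, -b', …, -b^{(w-j-1)}) = ∑_{i=0}^{d-j} C(j+i,j) m_{i+j} P_i(b)`. -/
theorem invariant_Rj_two_forms
    (d j : ℕ) (hd : 1 ≤ d) (hj : 1 ≤ j) (hjd : j ≤ d)
    (m : ℕ → ℝ → ℝ) (b : ℝ → ℝ)
    (hm : ∀ w, ContDiff ℝ (⊤ : ℕ∞) (m w)) (hb : ContDiff ℝ (⊤ : ℕ∞) b)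
    (x : ℝ) :
    ∑ w ∈ Finset.Icc j d,
        m w x * (w.choose j : ℝ)
          * bellComplete (w - j) (fun s => -(iteratedDeriv (s - 1) b x))
      = ∑ i ∈ Finset.range (d - j + 1),
          ((j + i).choose j : ℝ) * m (i + j) x * P b i x := by
  rw [← Ico_succ_right_eq_Icc, sum_Ico_eq_sum_range]
  have hdj : Order.succ d - j = d - j + 1 := by
    rw [Nat.succ_eq_succ]
    omega
  rw [hdj]
  refine sum_congr rfl fun i _ => ?_
  rw [Nat.add_sub_cancel_left, bellComplete_eq_P hb, add_comm i j]
  ring
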